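/- For all a, b ∈ ℕ and every finite simple graph G, the inequality w_{2a+b}(G) · w_b(G) ≤ w_0(G) · w_{2(a+b)}(G) holds, where w_j(G) denotes the number of walks of length j in G. -/

import Mathlib

open Finset

/-- The number of walks of length `k` in a graph `G`, computed as
`𝟙ᵀ A^k 𝟙 = ∑_{x,y} (A^k)_{x,y}` for the adjacency matrix `A`. -/
noncomputable def walkNum {V : Type*} [Fintype V] [DecidableEq V] (G : SimpleGraph V)
    [DecidableRel G.Adj] (k : ℕ) : ℝ :=
  ∑ x : V, ∑ y : V, ((G.adjMatrix ℝ) ^ k) x y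

lemma walkNum_spectral {V : Type} [Fintype V] [DecidableEq V] (G : SimpleGraph V)
    [DecidableRel G.Adj] : ∃ p l : V → ℝ, (∀ i, 0 ≤ p i) ∧
      ∀ k, walkNum G k = ∑ i, p i * l i ^ k := by
  have hA : (G.adjMatrix ℝ).IsHermitian := by
    rw [Matrix.IsHermitian, Matrix.conjTranspose_eq_transpose_of_trivial]
    exact G.isSymm_adjMatrix
  refine ⟨fun i => (∑ x, (hA.eigenvectorUnitary : Matrix V V ℝ) x i) ^ 2, hA.eigenvalues,
    fun i => sq_nonneg _, fun k => ?_⟩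
  have h := hA.spectral_theorem
  have hk : ∀ x y, ((G.adjMatrix ℝ) ^ k) x y = ∑ i, (hA.eigenvectorUnitary : Matrix V V ℝ) x i *
      hA.eigenvalues i ^ k * (hA.eigenvectorUnitary : Matrix V V ℝ) y i := by
    intro x y
    conv_lhs => rw [h]
    rw [← map_pow, Unitary.conjStarAlgAut_apply, Matrix.diagonal_pow, Matrix.mul_apply]
    refine Finset.sum_congr rfl fun i _ => ?_
    rw [Matrix.mul_diagonal]
    simp [Matrix.star_apply]
  unfold walkNum
  simp only [hk]
  rw [Finset.sum_congr rfl fun x _ => Finset.sum_comm, Finset.sum_comm]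
  refine Finset.sum_congr rfl fun i _ => ?_
  rw [sq, Finset.sum_mul_sum, Finset.sum_mul]
  refine Finset.sum_congr rfl fun x _ => ?_
  rw [Finset.sum_mul]
  refine Finset.sum_congr rfl fun y _ => ?_
  ring

lemma pow_cheb (a b : ℕ) (x y : ℝ) :
    0 ≤ (x ^ (2 * a + b) - y ^ (2 * a + b)) * (x ^ b - y ^ b) := by
  rcases Nat.even_or_odd b with hb | hb
  · have h2 : Even (2 * a + b) := (even_two_mul a).add hb
    rw [← hb.pow_abs x, ← hb.pow_abs y, ← h2.pow_abs x, ← h2.pow_abs y]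
    rcases le_total |x| |y| with h | h
    · exact mul_nonneg_of_nonpos_of_nonpos (sub_nonpos.2 (by gcongr)) (sub_nonpos.2 (by gcongr))
    · exact mul_nonneg (sub_nonneg.2 (by gcongr)) (sub_nonneg.2 (by gcongr))
  · have h2 : Odd (2 * a + b) := (even_two_mul a).add_odd hb
    rcases le_total x y with h | h
    · exact mul_nonneg_of_nonpos_of_nonpos (sub_nonpos.2 (h2.strictMono_pow.monotone h))
        (sub_nonpos.2 (hb.strictMono_pow.monotone h))
    · exact mul_nonneg (sub_nonneg.2 (h2.strictMono_pow.monotone h))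
        (sub_nonneg.2 (hb.strictMono_pow.monotone h))

theorem lagarias_inequality (a b : ℕ)
    (V : Type) [Fintype V] [DecidableEq V] (G : SimpleGraph V) [DecidableRel G.Adj] :
    walkNum G (2 * a + b) * walkNum G b ≤ walkNum G 0 * walkNum G (2 * (a + b)) := by
  obtain ⟨p, l, hp, hw⟩ := walkNum_spectral G
  have key : 0 ≤ ∑ i, ∑ j, p i * p j *
      ((l i ^ (2 * a + b) - l j ^ (2 * a + b)) * (l i ^ b - l j ^ b)) :=
    Finset.sum_nonneg fun i _ => Finset.sum_nonneg fun j _ =>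
      mul_nonneg (mul_nonneg (hp i) (hp j)) (pow_cheb a b _ _)
  have e : ∑ i, ∑ j, p i * p j *
      ((l i ^ (2 * a + b) - l j ^ (2 * a + b)) * (l i ^ b - l j ^ b)) =
      walkNum G (2 * (a + b)) * walkNum G 0 + walkNum G 0 * walkNum G (2 * (a + b))
      - walkNum G (2 * a + b) * walkNum G b - walkNum G b * walkNum G (2 * a + b) := by
    simp only [hw, Finset.sum_mul_sum, ← Finset.sum_add_distrib, ← Finset.sum_sub_distrib]
    refine Finset.sum_congr rfl fun i _ => Finset.sum_congr rfl fun j _ => ?_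
    ring
  linarith [mul_comm (walkNum G (2 * (a + b))) (walkNum G 0),
    mul_comm (walkNum G (2 * a + b)) (walkNum G b)]
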